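/- Let f : ℤ² → ℂ be harmonic. Then for every l ∈ ℕ one has (Δ^l |f|²)(0) = 4^{-l}·Σ_{(s_1,…,s_l)∈S^l} |(∂_{s_1}∘⋯∘∂_{s_l} f)(0)|², where |f|² : ℤ² → ℝ is the function x ↦ |f(x)|² and Δ^l is the l-th iterate of the discrete Laplacian. -/

import Mathlib

open Finset

noncomputable section

/-- The generating set `S = {(1,0),(-1,0),(0,1),(0,-1)}` of ℤ². -/
def Sfin : Finset (ℤ × ℤ) := {(1,0), (-1,0), (0,1), (0,-1)}

/-- The discrete Laplacian on ℤ². -/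
noncomputable def lap2 (u : ℤ × ℤ → ℂ) : ℤ × ℤ → ℂ :=
  fun x => (4 : ℂ)⁻¹ * ∑ s ∈ Sfin, (u (x + s) - u x)

/-- The discrete Laplacian on ℤ² for real-valued functions. -/
noncomputable def lap2R (u : ℤ × ℤ → ℝ) : ℤ × ℤ → ℝ :=
  fun x => (4 : ℝ)⁻¹ * ∑ s ∈ Sfin, (u (x + s) - u x)

/-- The partial difference `(∂_s u)(x) = u(x+s) - u(x)`. -/
def pd (s : ℤ × ℤ) (u : ℤ × ℤ → ℂ) : ℤ × ℤ → ℂ := fun x => u (x + s) - u x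

theorem aux_sumS (g : ℤ × ℤ → ℂ) : ∑ s ∈ Sfin, g s = g (1,0) + g (-1,0) + g (0,1) + g (0,-1) := by
  simp [Sfin, add_assoc]

theorem aux_sumSR (g : ℤ × ℤ → ℝ) : ∑ s ∈ Sfin, g s = g (1,0) + g (-1,0) + g (0,1) + g (0,-1) := by
  simp [Sfin, add_assoc]

theorem aux_pd (s : ℤ × ℤ) (g : ℤ × ℤ → ℂ) (hg : lap2 g = 0) : lap2 (pd s g) = 0 := by
  funext x
  have h1 := congrFun hg x
  have h2 := congrFun hg (x + s)
  simp only [lap2, aux_sumS, pd, Pi.zero_apply, add_right_comm x _ s] at h1 h2 ⊢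
  linear_combination h2 - h1

theorem aux_foldr (L : List (ℤ × ℤ)) (g : ℤ × ℤ → ℂ) (hg : lap2 g = 0) :
    lap2 (L.foldr pd g) = 0 := by
  induction L with
  | nil => exact hg
  | cons a L ih => exact aux_pd a _ ih

theorem aux_lap (g : ℤ × ℤ → ℂ) (hg : lap2 g = 0) (x : ℤ × ℤ) :
    lap2R (fun x => ‖g x‖ ^ 2) x = (4 : ℝ)⁻¹ * ∑ t ∈ Sfin, ‖pd t g x‖ ^ 2 := by
  have h1 := congrFun hg x
  have hr := congrArg Complex.re h1
  have hi := congrArg Complex.im h1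
  simp only [lap2, lap2R, aux_sumS, aux_sumSR, pd, Pi.zero_apply, Complex.sq_norm,
    Complex.normSq_apply] at hr hi ⊢
  have e : (4 : ℂ)⁻¹ = ((4⁻¹ : ℝ) : ℂ) := by push_cast; rfl
  rw [e] at hr hi
  rw [Complex.re_ofReal_mul] at hr
  rw [Complex.im_ofReal_mul] at hi
  simp only [Complex.add_re, Complex.add_im, Complex.sub_re, Complex.sub_im, Complex.zero_re,
    Complex.zero_im] at hr hi ⊢
  linear_combination 2 * (g x).re * hr + 2 * (g x).im * hi

theorem aux_sum_cons (l : ℕ) (F : (Fin (l + 1) → ℤ × ℤ) → ℝ) :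
    ∑ s ∈ Fintype.piFinset (fun _ : Fin (l + 1) => Sfin), F s =
      ∑ s ∈ Fintype.piFinset (fun _ : Fin l => Sfin), ∑ t ∈ Sfin,
        F (Fin.cons t s : Fin (l + 1) → ℤ × ℤ) := by
  rw [← Finset.sum_product']
  refine Finset.sum_nbij' (fun s => (Fin.tail s, s 0))
    (fun p => (Fin.cons p.2 p.1 : Fin (l + 1) → ℤ × ℤ)) ?_ ?_ ?_ ?_ ?_
  · intro s hs
    simp only [Fintype.mem_piFinset, Finset.mem_product, Fin.tail] at hs ⊢
    exact ⟨fun i => hs _, hs _⟩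
  · intro p hp
    simp only [Fintype.mem_piFinset, Finset.mem_product] at hp ⊢
    intro i
    refine Fin.cases ?_ (fun j => ?_) i
    · simpa using hp.2
    · simpa using hp.1 j
  · intro s _
    simp
  · intro p _
    simp
  · intro s _
    simp

theorem aux_main (f : ℤ × ℤ → ℂ) (hf : lap2 f = 0) (l : ℕ) :
    lap2R^[l] (fun x => ‖f x‖ ^ 2) = fun x =>
      (4 : ℝ)⁻¹ ^ l * ∑ s ∈ Fintype.piFinset (fun _ : Fin l => Sfin),
        ‖((List.ofFn s).foldr pd f) x‖ ^ 2 := by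
  induction l with
  | zero => funext x; simp
  | succ l ih =>
    rw [Function.iterate_succ_apply', ih]
    funext x
    have key : ∀ s : Fin l → ℤ × ℤ, ∑ t ∈ Sfin,
        ‖((List.ofFn (Fin.cons t s : Fin (l + 1) → ℤ × ℤ)).foldr pd f) x‖ ^ 2 =
        ∑ t ∈ Sfin, (‖((List.ofFn s).foldr pd f) (x + t)‖ ^ 2
          - ‖((List.ofFn s).foldr pd f) x‖ ^ 2) := by
      intro s
      have h := aux_lap _ (aux_foldr (List.ofFn s) f hf) x
      unfold lap2R at h
      have h' := mul_left_cancel₀ (by norm_num) h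
      rw [h']
      simp [List.ofFn_succ]
    rw [aux_sum_cons, Finset.sum_congr rfl (fun s _ => key s), Finset.sum_comm]
    simp only [lap2R, Finset.sum_sub_distrib, ← mul_sub, ← Finset.mul_sum]
    ring

theorem laplace_powers_harmonic_fcn (f : ℤ × ℤ → ℂ) (hf : lap2 f = 0) (l : ℕ) :
    (lap2R^[l] (fun x => ‖f x‖ ^ 2)) 0 =
      (4 : ℝ)⁻¹ ^ l * ∑ s ∈ Fintype.piFinset (fun _ : Fin l => Sfin),
        ‖((List.ofFn s).foldr pd f) 0‖ ^ 2 := by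
  rw [aux_main f hf l]
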